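/- arXiv:0710.2781 — 2 statements merged into one kernel-verified Lean document; each statement's English description precedes it below -/
import Mathlib

section
/- For every i >= 0, the patch P_i of the Rauzy tiling contains no acute isolated vertex: every vertex of P_i that lies on exactly one rhombus of P_i sits at an obtuse corner of that rhombus. -/
/-!
The Rauzy tiling, built recursively from the Rauzy substitution, together with the
combinatorics of its patches `P_i` (corners, edges, sides, acute/obtuse corners).
-/

noncomputable section

/-- The projections `proj(e₁), proj(e₂), proj(e₃)` of the standard basis vectors of
`ℝ³` to the plane. -/
def pe : Fin 3 → ℝ × ℝ :=
  ![(-(Real.sqrt 3) / 2, -(1 : ℝ) / 2), (Real.sqrt 3 / 2, -(1 : ℝ) / 2), ((0 : ℝ), 1)]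

/-- The projection to the plane of an integer vector of `ℝ³`. -/
def projZ (t : Fin 3 → ℤ) : ℝ × ℝ :=
  (t 0 : ℝ) • pe 0 + (t 1 : ℝ) • pe 1 + (t 2 : ℝ) • pe 2

/-- A (representative of a) rhombus of the Rauzy tiling: a translation vector
`t ∈ ℤ³` together with a type in `{1, 2, 3}` (recorded as `Fin 3`), representing the
rhombus `proj(t) + R_k`. -/
abbrev RauzyRhomb := (Fin 3 → ℤ) × Fin 3

/-- The pair of unit vectors spanning a rhombus of each type: the rhombus `R_k` is
the projection of the face of the unit cube spanned by the basis vectors other than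
`e_k`. -/
def spanVecs : Fin 3 → (ℝ × ℝ) × (ℝ × ℝ) := ![(pe 1, pe 2), (pe 0, pe 2), (pe 0, pe 1)]

/-- The base point of a rhombus. -/
def rbase (r : RauzyRhomb) : ℝ × ℝ := projZ r.1

/-- The four corners of a rhombus, in cyclic order. -/
def cornerCyc (r : RauzyRhomb) : Fin 4 → ℝ × ℝ :=
  ![rbase r, rbase r + (spanVecs r.2).1,
    rbase r + (spanVecs r.2).1 + (spanVecs r.2).2, rbase r + (spanVecs r.2).2]

/-- The set of corners of a rhombus. -/
def corners (r : RauzyRhomb) : Set (ℝ × ℝ) := Set.range (cornerCyc r)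

/-- The two acute corners of a rhombus (the interior angle between the two spanning
vectors is `120°`, so the corners at `base + u` and `base + v` are the acute ones). -/
def acuteCorners (r : RauzyRhomb) : Set (ℝ × ℝ) :=
  {rbase r + (spanVecs r.2).1, rbase r + (spanVecs r.2).2}

/-- The two obtuse corners of a rhombus. -/
def obtuseCorners (r : RauzyRhomb) : Set (ℝ × ℝ) :=
  {rbase r, rbase r + (spanVecs r.2).1 + (spanVecs r.2).2}

/-- The four sides of a rhombus, as unordered pairs of points of the plane. -/
def sides (r : RauzyRhomb) : Set (Sym2 (ℝ × ℝ)) :=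
  {s(cornerCyc r 0, cornerCyc r 1), s(cornerCyc r 1, cornerCyc r 2),
   s(cornerCyc r 2, cornerCyc r 3), s(cornerCyc r 3, cornerCyc r 0)}

/-- The matrix `M` of the Rauzy substitution, acting on `ℤ³`. -/
def mApp (t : Fin 3 → ℤ) : Fin 3 → ℤ := ![t 1, t 2, t 0 - t 1 - t 2]

/-- The columns `c₁, c₂, c₃` of the matrix `M`. -/
def col : Fin 3 → (Fin 3 → ℤ) := ![![0, 0, 1], ![1, 0, -1], ![0, 1, -1]]

/-- The Rauzy substitution on rhombi:
`Sub(t + R₁) = {Mt + R₃, Mt + c₂ + R₁, Mt + c₃ + R₂}`, `Sub(t + R₂) = {Mt + R₁}`,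
`Sub(t + R₃) = {Mt + R₂}`. -/
def subR (r : RauzyRhomb) : Set RauzyRhomb :=
  (![{(mApp r.1, 2), (mApp r.1 + col 1, 0), (mApp r.1 + col 2, 1)},
     {(mApp r.1, 0)}, {(mApp r.1, 1)}] : Fin 3 → Set RauzyRhomb) r.2

/-- The patches `P_i` of the Rauzy tiling: `P₀ = {R₁, R₂, R₃}` and `P_{i+1}` is the
union of the images under the substitution of the rhombi of `P_i`. -/
def patch : ℕ → Set RauzyRhomb
  | 0 => {((0 : Fin 3 → ℤ), 0), ((0 : Fin 3 → ℤ), 1), ((0 : Fin 3 → ℤ), 2)}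
  | i + 1 => ⋃ r ∈ patch i, subR r

/-- The set of edges of the quiver `Q_i` given by the patch `P_i`. -/
def patchEdges (i : ℕ) : Set (Sym2 (ℝ × ℝ)) := ⋃ r ∈ patch i, sides r

/-- The set of edges of the full Rauzy tiling (the quiver `Q`). -/
def rauzyEdges : Set (Sym2 (ℝ × ℝ)) := ⋃ i, patchEdges i

/-- `p` is a vertex of the patch `P_i`. -/
def IsPatchVertex (i : ℕ) (p : ℝ × ℝ) : Prop := ∃ r ∈ patch i, p ∈ corners r

/-- `p` is a vertex of the Rauzy tiling. -/
def IsRauzyVertex (p : ℝ × ℝ) : Prop := ∃ i, IsPatchVertex i p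

/-- The number of edges of an edge-set `E` meeting the point `p`. -/
def degree (E : Set (Sym2 (ℝ × ℝ))) (p : ℝ × ℝ) : ℕ := Set.ncard {s ∈ E | p ∈ s}

def InP (i : ℕ) (x y z : ℤ) (k : Fin 3) : Prop := ((![x, y, z] : Fin 3 → ℤ), k) ∈ patch i

lemma vec3_eq (t : Fin 3 → ℤ) : t = ![t 0, t 1, t 2] := by
  ext j; fin_cases j <;> rfl

lemma inP_of_eq {i : ℕ} {x y z a b c : ℤ} {k : Fin 3} (h : InP i x y z k)
    (ha : a = x) (hb : b = y) (hc : c = z) : InP i a b c k := by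
  subst ha hb hc; exact h

lemma mem_patch_succ (i : ℕ) (r : RauzyRhomb) :
    r ∈ patch (i + 1) ↔ ∃ s ∈ patch i, r ∈ subR s := by
  simp [patch]

lemma sub13 {i : ℕ} {x y z a b c : ℤ} (h : InP i x y z 0)
    (ha : a = y) (hb : b = z) (hc : c = x - y - z) : InP (i + 1) a b c 2 := by
  subst ha hb hc
  exact (mem_patch_succ _ _).2 ⟨_, h, by simp [subR, mApp]⟩

lemma sub11 {i : ℕ} {x y z a b c : ℤ} (h : InP i x y z 0)
    (ha : a = y + 1) (hb : b = z) (hc : c = x - y - z - 1) : InP (i + 1) a b c 0 := by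
  subst ha hb hc
  exact (mem_patch_succ _ _).2 ⟨_, h, by simp [subR, mApp, col, sub_eq_add_neg]⟩

lemma sub12 {i : ℕ} {x y z a b c : ℤ} (h : InP i x y z 0)
    (ha : a = y) (hb : b = z + 1) (hc : c = x - y - z - 1) : InP (i + 1) a b c 1 := by
  subst ha hb hc
  exact (mem_patch_succ _ _).2 ⟨_, h, by simp [subR, mApp, col, sub_eq_add_neg]⟩

lemma sub21 {i : ℕ} {x y z a b c : ℤ} (h : InP i x y z 1)
    (ha : a = y) (hb : b = z) (hc : c = x - y - z) : InP (i + 1) a b c 0 := by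
  subst ha hb hc
  exact (mem_patch_succ _ _).2 ⟨_, h, by simp [subR, mApp]⟩

lemma sub32 {i : ℕ} {x y z a b c : ℤ} (h : InP i x y z 2)
    (ha : a = y) (hb : b = z) (hc : c = x - y - z) : InP (i + 1) a b c 1 := by
  subst ha hb hc
  exact (mem_patch_succ _ _).2 ⟨_, h, by simp [subR, mApp]⟩

lemma inv_all {i : ℕ} {a b c : ℤ} {k : Fin 3} (h : InP (i + 1) a b c k) :
    ∃ x y z : ℤ,
      (InP i x y z 0 ∧ ((k = 2 ∧ a = y ∧ b = z ∧ c = x - y - z) ∨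
        (k = 0 ∧ a = y + 1 ∧ b = z ∧ c = x - y - z - 1) ∨
        (k = 1 ∧ a = y ∧ b = z + 1 ∧ c = x - y - z - 1))) ∨
      (InP i x y z 1 ∧ k = 0 ∧ a = y ∧ b = z ∧ c = x - y - z) ∨
      (InP i x y z 2 ∧ k = 1 ∧ a = y ∧ b = z ∧ c = x - y - z) := by
  obtain ⟨⟨t, k'⟩, hs, hr⟩ := (mem_patch_succ _ _).1 h
  refine ⟨t 0, t 1, t 2, ?_⟩
  rw [vec3_eq t] at hs
  unfold InP
  fin_cases k'
  · left
    refine ⟨hs, ?_⟩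
    simp [subR, mApp, col] at hr
    rcases hr with ⟨⟨h1, h2, h3⟩, h4⟩ | ⟨⟨h1, h2, h3⟩, h4⟩ | ⟨⟨h1, h2, h3⟩, h4⟩
    · left; exact ⟨h4, h1, h2, h3⟩
    · right; left; exact ⟨h4, h1, h2, by omega⟩
    · right; right; exact ⟨h4, h1, h2, by omega⟩
  · right; left
    refine ⟨hs, ?_⟩
    simp [subR, mApp] at hr
    tauto
  · right; right
    refine ⟨hs, ?_⟩
    simp [subR, mApp] at hr
    tauto

lemma inv1 {i : ℕ} {a b c : ℤ} (h : InP (i + 1) a b c 0) :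
    InP i (a + b + c) (a - 1) b 0 ∨ InP i (a + b + c) a b 1 := by
  obtain ⟨x, y, z, ⟨h, ⟨hk, h1, h2, h3⟩ | ⟨hk, h1, h2, h3⟩ | ⟨hk, h1, h2, h3⟩⟩ |
    ⟨h, hk, h1, h2, h3⟩ | ⟨h, hk, h1, h2, h3⟩⟩ := inv_all h
  all_goals first
    | exact absurd hk (by decide)
    | exact Or.inl (inP_of_eq h (by omega) (by omega) (by omega))
    | exact Or.inr (inP_of_eq h (by omega) (by omega) (by omega))

lemma inv2 {i : ℕ} {a b c : ℤ} (h : InP (i + 1) a b c 1) :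
    InP i (a + b + c) a (b - 1) 0 ∨ InP i (a + b + c) a b 2 := by
  obtain ⟨x, y, z, ⟨h, ⟨hk, h1, h2, h3⟩ | ⟨hk, h1, h2, h3⟩ | ⟨hk, h1, h2, h3⟩⟩ |
    ⟨h, hk, h1, h2, h3⟩ | ⟨h, hk, h1, h2, h3⟩⟩ := inv_all h
  all_goals first
    | exact absurd hk (by decide)
    | exact Or.inl (inP_of_eq h (by omega) (by omega) (by omega))
    | exact Or.inr (inP_of_eq h (by omega) (by omega) (by omega))

lemma inv3 {i : ℕ} {a b c : ℤ} (h : InP (i + 1) a b c 2) :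
    InP i (a + b + c) a b 0 := by
  obtain ⟨x, y, z, ⟨h, ⟨hk, h1, h2, h3⟩ | ⟨hk, h1, h2, h3⟩ | ⟨hk, h1, h2, h3⟩⟩ |
    ⟨h, hk, h1, h2, h3⟩ | ⟨h, hk, h1, h2, h3⟩⟩ := inv_all h
  all_goals first
    | exact absurd hk (by decide)
    | exact (inP_of_eq h (by omega) (by omega) (by omega))

lemma inP_zero {x y z : ℤ} {k : Fin 3} (h : InP 0 x y z k) (k' : Fin 3) : InP 0 x y z k' := by
  have h0 : (![x, y, z] : Fin 3 → ℤ) = 0 := by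
    simp only [InP, patch, Set.mem_insert_iff, Set.mem_singleton_iff, Prod.mk.injEq] at h
    tauto
  unfold InP
  rw [h0]
  fin_cases k' <;> simp [patch]

lemma factB1 {i : ℕ} {a b c : ℤ} (h : InP i a b c 2) :
    InP i a b c 1 ∨ InP i (a + 1) b (c - 1) 0 := by
  cases i with
  | zero => exact Or.inl (inP_zero h _)
  | succ i => exact Or.inr (sub11 (inv3 h) (by omega) (by omega) (by omega))

lemma factB2 {i : ℕ} {a b c : ℤ} (h : InP i a b c 2) :
    InP i a b c 0 ∨ InP i a (b + 1) (c - 1) 1 := by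
  cases i with
  | zero => exact Or.inl (inP_zero h _)
  | succ i => exact Or.inr (sub12 (inv3 h) (by omega) (by omega) (by omega))

lemma factC1 {i : ℕ} {a b c : ℤ} (h : InP i a b c 1) :
    InP i a b c 0 ∨ InP i a (b - 1) (c + 1) 2 ∨ InP i a b (c + 1) 1 := by
  cases i with
  | zero => exact Or.inl (inP_zero h _)
  | succ i =>
    rcases inv2 h with h | h
    · exact Or.inr (Or.inl (sub13 h (by omega) (by omega) (by omega)))
    · rcases factB1 h with h | h
      · exact Or.inl (sub21 h (by omega) (by omega) (by omega))
      · exact Or.inr (Or.inr (sub12 h (by omega) (by omega) (by omega)))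

lemma factC2 {i : ℕ} {a b c : ℤ} (h : InP i a b c 1) :
    InP i a b c 2 ∨ InP i (a + 1) (b - 1) c 0 := by
  cases i with
  | zero => exact Or.inl (inP_zero h _)
  | succ i =>
    rcases inv2 h with h | h
    · exact Or.inr (sub11 h (by omega) (by omega) (by omega))
    · rcases factB2 h with h | h
      · exact Or.inl (sub13 h (by omega) (by omega) (by omega))
      · exact Or.inr (sub21 h (by omega) (by omega) (by omega))

lemma factD1 {i : ℕ} {a b c : ℤ} (h : InP i a b c 0) :
    InP i a b c 2 ∨ InP i (a - 1) (b + 1) c 1 ∨ InP i a (b + 1) (c - 1) 0 := by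
  cases i with
  | zero => exact Or.inl (inP_zero h _)
  | succ i =>
    rcases inv1 h with h | h
    · exact Or.inr (Or.inl (sub12 h (by omega) (by omega) (by omega)))
    · rcases factC1 h with h | h | h
      · exact Or.inl (sub13 h (by omega) (by omega) (by omega))
      · exact Or.inr (Or.inl (sub32 h (by omega) (by omega) (by omega)))
      · exact Or.inr (Or.inr (sub21 h (by omega) (by omega) (by omega)))

lemma factD2 {i : ℕ} {a b c : ℤ} (h : InP i a b c 0) :
    InP i a b c 1 ∨ InP i (a - 1) b (c + 1) 2 ∨ InP i a b (c + 1) 0 := by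
  cases i with
  | zero => exact Or.inl (inP_zero h _)
  | succ i =>
    rcases inv1 h with h | h
    · exact Or.inr (Or.inl (sub13 h (by omega) (by omega) (by omega)))
    · rcases factC2 h with h | h
      · exact Or.inl (sub32 h (by omega) (by omega) (by omega))
      · exact Or.inr (Or.inr (sub11 h (by omega) (by omega) (by omega)))

lemma rbase_mk (x y z : ℤ) (k : Fin 3) :
    rbase (![x, y, z], k) = (x : ℝ) • pe 0 + (y : ℝ) • pe 1 + (z : ℝ) • pe 2 := by
  simp [rbase, projZ]

lemma corner_mem {r : RauzyRhomb} {p : ℝ × ℝ} (j : Fin 4) (h : cornerCyc r j = p) :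
    p ∈ corners r := ⟨j, h⟩

lemma ne_z (x y z : ℤ) (k : Fin 3) : rbase (![x, y, z + 1], k) ≠ rbase (![x, y, z], k) := by
  intro h
  have := congrArg Prod.snd h
  simp [rbase_mk, pe] at this

lemma ne_yz (x y z : ℤ) (k : Fin 3) :
    rbase (![x, y + 1, z - 1], k) ≠ rbase (![x, y, z], k) := by
  intro h
  have := congrArg Prod.snd h
  simp [rbase_mk, pe] at this
  linarith

/-- The acute corners are never isolated. -/
lemma acute_not_iso (i : ℕ) (p : ℝ × ℝ) (a b c : ℤ) (k : Fin 3) (hr : InP i a b c k)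
    (hp : p ∈ acuteCorners (![a, b, c], k)) :
    ∃ r' ∈ patch i, p ∈ corners r' ∧
      ¬ (rbase r' = rbase (![a, b, c], k) ∧ r'.2 = k) := by
  have key : ∀ (a' b' c' : ℤ) (k' : Fin 3) (j : Fin 4), InP i a' b' c' k' →
      cornerCyc (![a', b', c'], k') j = p →
      ¬ (rbase (![a', b', c'], k') = rbase (![a, b, c], k) ∧ k' = k) →
      ∃ r' ∈ patch i, p ∈ corners r' ∧
      ¬ (rbase r' = rbase (![a, b, c], k) ∧ r'.2 = k) :=
    fun a' b' c' k' j h1 h2 h3 => ⟨_, h1, ⟨j, h2⟩, h3⟩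
  fin_cases k
  · rcases hp with hp | hp
    · rcases factD1 hr with h | h | h
      · refine key _ _ _ _ 3 h ?_ (by simp)
        subst hp; simp [cornerCyc, rbase_mk, spanVecs]
      · refine key _ _ _ _ 1 h ?_ (by simp)
        subst hp; simp [cornerCyc, rbase_mk, spanVecs]; module
      · refine key _ _ _ _ 3 h ?_ (fun h => ne_yz _ _ _ _ h.1)
        subst hp; simp [cornerCyc, rbase_mk, spanVecs]; module
    · rw [Set.mem_singleton_iff] at hp
      rcases factD2 hr with h | h | h
      · refine key _ _ _ _ 3 h ?_ (by simp)
        subst hp; simp [cornerCyc, rbase_mk, spanVecs]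
      · refine key _ _ _ _ 1 h ?_ (by simp)
        subst hp; simp [cornerCyc, rbase_mk, spanVecs]; module
      · refine key _ _ _ _ 0 h ?_ (fun h => ne_z _ _ _ _ h.1)
        subst hp; simp [cornerCyc, rbase_mk, spanVecs]; module
  · rcases hp with hp | hp
    · rcases factC2 hr with h | h
      · refine key _ _ _ _ 1 h ?_ (by simp)
        subst hp; simp [cornerCyc, rbase_mk, spanVecs]
      · refine key _ _ _ _ 1 h ?_ (by simp)
        subst hp; simp [cornerCyc, rbase_mk, spanVecs]; module
    · rw [Set.mem_singleton_iff] at hp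
      rcases factC1 hr with h | h | h
      · refine key _ _ _ _ 3 h ?_ (by simp)
        subst hp; simp [cornerCyc, rbase_mk, spanVecs]
      · refine key _ _ _ _ 3 h ?_ (by simp)
        subst hp; simp [cornerCyc, rbase_mk, spanVecs]; module
      · refine key _ _ _ _ 0 h ?_ (fun h => ne_z _ _ _ _ h.1)
        subst hp; simp [cornerCyc, rbase_mk, spanVecs]; module
  · rcases hp with hp | hp
    · rcases factB1 hr with h | h
      · refine key _ _ _ _ 1 h ?_ (by simp)
        subst hp; simp [cornerCyc, rbase_mk, spanVecs]
      · refine key _ _ _ _ 3 h ?_ (by simp)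
        subst hp; simp [cornerCyc, rbase_mk, spanVecs]; module
    · rw [Set.mem_singleton_iff] at hp
      rcases factB2 hr with h | h
      · refine key _ _ _ _ 1 h ?_ (by simp)
        subst hp; simp [cornerCyc, rbase_mk, spanVecs]
      · refine key _ _ _ _ 3 h ?_ (by simp)
        subst hp; simp [cornerCyc, rbase_mk, spanVecs]; module

/-- **Statement 11** (No acute isolated vertices, Lemma `acute`).
For every `i ≥ 0`, the patch `P_i` of the Rauzy tiling contains no acute isolated
vertex: every vertex of `P_i` that lies on exactly one rhombus of `P_i` (up to
geometric identification of representatives) sits at an obtuse corner of that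
rhombus. -/
theorem statement11 (i : ℕ) (p : ℝ × ℝ) (r : RauzyRhomb) (hr : r ∈ patch i)
    (hp : p ∈ corners r)
    (hiso : ∀ r' ∈ patch i, p ∈ corners r' → rbase r' = rbase r ∧ r'.2 = r.2) :
    p ∈ obtuseCorners r := by
  by_contra hno
  obtain ⟨t, k⟩ := r
  have ht := vec3_eq t
  generalize t 0 = a at ht
  generalize t 1 = b at ht
  generalize t 2 = c at ht
  subst ht
  have hac : p ∈ acuteCorners (![a, b, c], k) := by
    obtain ⟨j, rfl⟩ := hp
    fin_cases j
    · exact absurd (Or.inl rfl) hno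
    · exact Or.inl rfl
    · exact absurd (Or.inr rfl) hno
    · exact Or.inr rfl
  obtain ⟨r', h1, h2, h3⟩ := acute_not_iso i p a b c k hr hac
  exact h3 (hiso r' h1 h2)
end
end

section
/- For every i >= 0 and every vertex z of Q_i, if z is an n-vertex in the full Rauzy-tiling quiver Q and a k-vertex in Q_i (that is, z is a (k,n)-vertex), then n - k <= 3; equivalently, no (2,6)-vertex occurs in any Q_i. -/
/-!
The Rauzy tiling, built recursively from the Rauzy substitution, together with the
combinatorics of its patches `P_i` (corners, edges, sides, acute/obtuse corners).
-/

noncomputable section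

def eb : Fin 3 → (Fin 3 → ℤ) := ![![1, 0, 0], ![0, 1, 0], ![0, 0, 1]]

def vv (L : ℝ) : Fin 3 → ℝ := ![1, L + L ^ 2, L]

def ff (L : ℝ) (t : Fin 3 → ℤ) : ℝ := (t 0 : ℝ) + (t 1 : ℝ) * (L + L ^ 2) + (t 2 : ℝ) * L

def GoodL (L : ℝ) : Prop := L ^ 3 + L ^ 2 + L = 1 ∧ 1 / 2 < L ∧ L < 3 / 5

theorem exists_goodL : ∃ L, GoodL L := by
  have h := intermediate_value_Ioo (f := fun x : ℝ => x ^ 3 + x ^ 2 + x)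
    (show (1 / 2 : ℝ) ≤ 3 / 5 by norm_num) (by fun_prop)
  obtain ⟨L, hL, h1⟩ := h (show (1 : ℝ) ∈ _ by constructor <;> norm_num)
  exact ⟨L, h1, hL.1, hL.2⟩

theorem ff_add (L : ℝ) (s t : Fin 3 → ℤ) : ff L (s + t) = ff L s + ff L t := by
  simp [ff]; ring

theorem ff_eb (L : ℝ) (a : Fin 3) : ff L (eb a) = vv L a := by
  fin_cases a <;> simp [ff, eb, vv]

theorem ff_mApp {L : ℝ} (hL : GoodL L) (t : Fin 3 → ℤ) : ff L (mApp t) = L * ff L t := by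
  have h : L ^ 3 = 1 - L - L ^ 2 := by linarith [hL.1]
  simp [ff, mApp]
  linear_combination (-(t 1 : ℝ)) * h

theorem ff_col (L : ℝ) : ff L (col 1) = 1 - L ∧ ff L (col 2) = L ^ 2 := by
  constructor <;> simp [ff, col]; ring

theorem ff_zero (L : ℝ) : ff L 0 = 0 := by simp [ff]

theorem mem_subR {q r : RauzyRhomb} (h : q ∈ subR r) :
    (r.2 = 0 ∧ (q = (mApp r.1, 2) ∨ q = (mApp r.1 + col 1, 0) ∨ q = (mApp r.1 + col 2, 1))) ∨
    (r.2 = 1 ∧ q = (mApp r.1, 0)) ∨ (r.2 = 2 ∧ q = (mApp r.1, 1)) := by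
  obtain ⟨t, k⟩ := r
  fin_cases k
  · left; simpa [subR] using h
  · right; left; simpa [subR] using h
  · right; right; simpa [subR] using h

theorem mem_patch_succ_s11 {i : ℕ} {q : RauzyRhomb} (h : q ∈ patch (i + 1)) :
    (∃ t, (t, 0) ∈ patch i ∧
      (q = (mApp t, 2) ∨ q = (mApp t + col 1, 0) ∨ q = (mApp t + col 2, 1))) ∨
    (∃ t, (t, 1) ∈ patch i ∧ q = (mApp t, 0)) ∨ (∃ t, (t, 2) ∈ patch i ∧ q = (mApp t, 1)) := by
  simp only [patch, Set.mem_iUnion] at h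
  obtain ⟨⟨t, k⟩, hr, hq⟩ := h
  rcases mem_subR hq with ⟨h1, h2⟩ | ⟨h1, h2⟩ | ⟨h1, h2⟩ <;> simp only at h1 h2 <;> subst h1
  · exact Or.inl ⟨t, hr, h2⟩
  · exact Or.inr (Or.inl ⟨t, hr, h2⟩)
  · exact Or.inr (Or.inr ⟨t, hr, h2⟩)

theorem p0 {i : ℕ} {t : Fin 3 → ℤ} (h : (t, 0) ∈ patch i) :
    (mApp t, 2) ∈ patch (i + 1) ∧ (mApp t + col 1, 0) ∈ patch (i + 1) ∧
    (mApp t + col 2, 1) ∈ patch (i + 1) := by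
  simp only [patch, Set.mem_iUnion]
  exact ⟨⟨_, h, by simp [subR]⟩, ⟨_, h, by simp [subR]⟩, ⟨_, h, by simp [subR]⟩⟩

theorem p1 {i : ℕ} {t : Fin 3 → ℤ} (h : (t, 1) ∈ patch i) : (mApp t, 0) ∈ patch (i + 1) := by
  simp only [patch, Set.mem_iUnion]
  exact ⟨_, h, by simp [subR]⟩

theorem p2 {i : ℕ} {t : Fin 3 → ℤ} (h : (t, 2) ∈ patch i) : (mApp t, 1) ∈ patch (i + 1) := by
  simp only [patch, Set.mem_iUnion]
  exact ⟨_, h, by simp [subR]⟩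

theorem mApp_zero : mApp 0 = 0 := by
  ext j; fin_cases j <;> simp [mApp]

theorem zero_mem_patch (i : ℕ) : ∀ k, ((0 : Fin 3 → ℤ), k) ∈ patch i := by
  induction i with
  | zero => intro k; fin_cases k <;> simp [patch]
  | succ i ih =>
    intro k
    have h0 := (p0 (ih 0)).1
    have h1 := p1 (ih 1)
    have h2 := p2 (ih 2)
    rw [mApp_zero] at h0 h1 h2
    fin_cases k <;> assumption

theorem mem_patch_zero {t : Fin 3 → ℤ} {k : Fin 3} (h : (t, k) ∈ patch 0) : t = 0 := by
  simp only [patch, Set.mem_insert_iff, Set.mem_singleton_iff, Prod.mk.injEq] at h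
  tauto

theorem patch_bound {L : ℝ} (hL : GoodL L) (i : ℕ) : ∀ t k, (t, k) ∈ patch i →
    0 ≤ ff L t ∧ ff L t < vv L k := by
  obtain ⟨hc, h1, h2⟩ := id hL
  induction i with
  | zero =>
    intro t k h
    rw [mem_patch_zero h, ff_zero]
    refine ⟨le_rfl, ?_⟩
    fin_cases k <;> simp [vv] <;> nlinarith
  | succ i ih =>
    intro t k h
    rcases mem_patch_succ_s11 h with ⟨u, hu, h | h | h⟩ | ⟨u, hu, h⟩ | ⟨u, hu, h⟩ <;>
      obtain ⟨rfl, rfl⟩ := Prod.mk.inj h <;> obtain ⟨ha, hb⟩ := ih _ _ hu <;>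
      simp only [ff_add, ff_mApp hL, (ff_col L).1, (ff_col L).2] <;>
      simp [vv] at hb ⊢ <;> constructor <;> nlinarith

theorem cv {i : ℕ} {s t : Fin 3 → ℤ} {k : Fin 3} (h : (s, k) ∈ patch i)
    (hst : ∀ a, t a = s a) : (t, k) ∈ patch i := by
  rwa [funext hst]

theorem base_pair1 {L : ℝ} (hL : GoodL L) {i : ℕ} {t : Fin 3 → ℤ} (h : (t, 1) ∈ patch i)
    (hf : L ^ 2 ≤ ff L t) : (t - eb 1 + eb 2, 2) ∈ patch i := by
  obtain ⟨hc, h1, h2⟩ := id hL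
  cases i with
  | zero =>
    rw [mem_patch_zero h, ff_zero] at hf
    nlinarith
  | succ i =>
    rcases mem_patch_succ_s11 h with ⟨u, hu, h | h | h⟩ | ⟨u, hu, h⟩ | ⟨u, hu, h⟩ <;>
      obtain ⟨rfl, hk⟩ := Prod.mk.inj h <;> simp at hk
    · exact cv (p0 hu).1 (fun a => by
        simp only [Pi.add_apply, Pi.sub_apply]
        fin_cases a <;> simp [mApp, col, eb, Matrix.vecHead, Matrix.vecTail] <;> omega)
    · have := (patch_bound hL _ _ _ hu).2
      rw [ff_mApp hL] at hf
      simp [vv] at this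
      nlinarith

theorem base_pair2 {i : ℕ} {t : Fin 3 → ℤ} (h : (t, 2) ∈ patch i) :
    t = 0 ∨ (t + eb 1 - eb 2, 1) ∈ patch i := by
  cases i with
  | zero => exact Or.inl (mem_patch_zero h)
  | succ i =>
    right
    rcases mem_patch_succ_s11 h with ⟨u, hu, h | h | h⟩ | ⟨u, hu, h⟩ | ⟨u, hu, h⟩ <;>
      obtain ⟨rfl, hk⟩ := Prod.mk.inj h <;> simp at hk
    exact cv (p0 hu).2.2 (fun a => by
        simp only [Pi.add_apply, Pi.sub_apply]
        fin_cases a <;> simp [mApp, col, eb, Matrix.vecHead, Matrix.vecTail] <;> omega)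

theorem pair {L : ℝ} (hL : GoodL L) {i : ℕ} {t : Fin 3 → ℤ} {k j : Fin 3} (h : (t, k) ∈ patch i)
    (hjk : j ≠ k) (hf : 1 ≤ ff L (t + eb j)) :
    (t = 0 ∧ j = 0) ∨ (t + eb j - eb k, j) ∈ patch i := by
  obtain ⟨hc, h1, h2⟩ := id hL
  cases i with
  | zero =>
    left
    refine ⟨mem_patch_zero h, ?_⟩
    rw [mem_patch_zero h, zero_add, ff_eb] at hf
    fin_cases j <;> simp [vv] at hf ⊢ <;> nlinarith
  | succ i =>
    rcases mem_patch_succ_s11 h with ⟨u, hu, h | h | h⟩ | ⟨u, hu, h⟩ | ⟨u, hu, h⟩ <;>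
      obtain ⟨rfl, rfl⟩ := Prod.mk.inj h
    · right
      fin_cases j <;> simp at hjk
      · exact cv (p0 hu).2.1 (fun a => by
        simp only [Pi.add_apply, Pi.sub_apply]
        fin_cases a <;> simp [mApp, col, eb, Matrix.vecHead, Matrix.vecTail] <;> omega)
      · exact cv (p0 hu).2.2 (fun a => by
        simp only [Pi.add_apply, Pi.sub_apply]
        fin_cases a <;> simp [mApp, col, eb, Matrix.vecHead, Matrix.vecTail] <;> omega)
    · right
      fin_cases j <;> simp at hjk
      · exact cv (p0 hu).2.2 (fun a => by
        simp only [Pi.add_apply, Pi.sub_apply]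
        fin_cases a <;> simp [mApp, col, eb, Matrix.vecHead, Matrix.vecTail] <;> omega)
      · exact cv (p0 hu).1 (fun a => by
        simp only [Pi.add_apply, Pi.sub_apply]
        fin_cases a <;> simp [mApp, col, eb, Matrix.vecHead, Matrix.vecTail] <;> omega)
    · right
      fin_cases j <;> simp at hjk
      · exact cv (p0 hu).2.1 (fun a => by
        simp only [Pi.add_apply, Pi.sub_apply]
        fin_cases a <;> simp [mApp, col, eb, Matrix.vecHead, Matrix.vecTail] <;> omega)
      · exact cv (p0 hu).1 (fun a => by
        simp only [Pi.add_apply, Pi.sub_apply]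
        fin_cases a <;> simp [mApp, col, eb, Matrix.vecHead, Matrix.vecTail] <;> omega)
    · have hb := (patch_bound hL _ _ _ hu)
      rw [ff_add, ff_mApp hL, ff_eb] at hf
      fin_cases j <;> simp at hjk <;> simp [vv] at hf hb
      · right
        have := p2 (base_pair1 hL hu (by nlinarith))
        exact cv this (fun a => by
        simp only [Pi.add_apply, Pi.sub_apply]
        fin_cases a <;> simp [mApp, col, eb, Matrix.vecHead, Matrix.vecTail] <;> omega)
      · nlinarith
    · have hb := (patch_bound hL _ _ _ hu)
      rw [ff_add, ff_mApp hL, ff_eb] at hf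
      fin_cases j <;> simp at hjk <;> simp [vv] at hf hb
      · rcases base_pair2 hu with rfl | hu'
        · left; simp [mApp_zero]
        · right
          exact cv (p1 hu') (fun a => by
        simp only [Pi.add_apply, Pi.sub_apply]
        fin_cases a <;> simp [mApp, col, eb, Matrix.vecHead, Matrix.vecTail] <;> omega)
      · nlinarith

theorem pe_add_ne (a b : Fin 3) : pe a + pe b ≠ 0 := by
  intro h
  have := congrArg Prod.snd h
  fin_cases a <;> fin_cases b <;> simp [pe] at this <;> norm_num at this

theorem sqrt3_pos : 0 < Real.sqrt 3 := by positivity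

theorem pe_inj {a b : Fin 3} (h : pe a = pe b) : a = b := by
  have h1 := congrArg Prod.fst h
  have h2 := congrArg Prod.snd h
  have := sqrt3_pos
  fin_cases a <;> fin_cases b <;> simp [pe] at h1 h2 ⊢ <;> linarith

theorem projZ_add (s t : Fin 3 → ℤ) : projZ (s + t) = projZ s + projZ t := by
  simp only [projZ, Pi.add_apply, Int.cast_add]; module

theorem projZ_eb (a : Fin 3) : projZ (eb a) = pe a := by
  fin_cases a <;> simp [projZ, eb]

theorem projZ_inj {L : ℝ} (hL : GoodL L) {x y : Fin 3 → ℤ} (h : projZ x = projZ y)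
    (hx : 0 ≤ ff L x) (hx' : ff L x < 1 + 2 * L + L ^ 2)
    (hy : 0 ≤ ff L y) (hy' : ff L y < 1 + 2 * L + L ^ 2) : ff L x = ff L y := by
  have h1 := congrArg Prod.fst h
  have h2 := congrArg Prod.snd h
  have hs := sqrt3_pos
  obtain ⟨-, hL1, -⟩ := hL
  simp [projZ, pe] at h1 h2
  have e1 : ((x 1 : ℝ) - x 0) = y 1 - y 0 := by
    have : Real.sqrt 3 * ((x 1 : ℝ) - x 0) = Real.sqrt 3 * (y 1 - y 0) := by linarith
    exact mul_left_cancel₀ hs.ne' this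
  have e1' : x 1 - x 0 = y 1 - y 0 := by exact_mod_cast e1
  have e2 : 2 * x 2 - x 0 - x 1 = 2 * y 2 - y 0 - y 1 := by
    have : (2 * x 2 - x 0 - x 1 : ℝ) = 2 * y 2 - y 0 - y 1 := by linarith
    exact_mod_cast this
  obtain ⟨m, hm⟩ : ∃ m, m = x 0 - y 0 := ⟨_, rfl⟩
  have a0 : x 0 = y 0 + m := by omega
  have a1 : x 1 = y 1 + m := by omega
  have a2 : x 2 = y 2 + m := by omega
  have hd : ff L x = ff L y + m * (1 + 2 * L + L ^ 2) := by
    simp only [ff, a0, a1, a2]; push_cast; ring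
  have hp : 0 < 1 + 2 * L + L ^ 2 := by positivity
  have m1 : (m : ℝ) < 1 := by
    by_contra hcon; push Not at hcon; nlinarith
  have m2 : (-1 : ℝ) < m := by
    by_contra hcon; push Not at hcon; nlinarith
  have m1' : m < 1 := by exact_mod_cast m1
  have m2' : -1 < m := by exact_mod_cast m2
  have : m = 0 := by omega
  rw [hd, this]; simp

def sp : Fin 3 → Fin 3 × Fin 3 := ![(1, 2), (0, 2), (0, 1)]

theorem spanVecs_eq (k : Fin 3) : spanVecs k = (pe (sp k).1, pe (sp k).2) := by
  fin_cases k <;> simp [spanVecs, sp]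

theorem sp_ne (k : Fin 3) : (sp k).1 ≠ (sp k).2 ∧ (sp k).1 ≠ k ∧ (sp k).2 ≠ k := by
  fin_cases k <;> simp [sp]

theorem vv_sum (L : ℝ) (k : Fin 3) :
    vv L k + vv L (sp k).1 + vv L (sp k).2 = 1 + 2 * L + L ^ 2 := by
  fin_cases k <;> simp [vv, sp] <;> ring

theorem vv_pos {L : ℝ} (hL : GoodL L) (a : Fin 3) : 0 < vv L a := by
  obtain ⟨-, h, -⟩ := hL
  fin_cases a <;> simp [vv] <;> nlinarith

theorem vv_le {L : ℝ} (hL : GoodL L) (a : Fin 3) : vv L a ≤ 1 := by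
  obtain ⟨-, h, h'⟩ := hL
  fin_cases a <;> simp [vv] <;> nlinarith

theorem side_lift {L : ℝ} (hL : GoodL L) {e : Sym2 (ℝ × ℝ)} (he : e ∈ rauzyEdges) :
    ∃ x a, e = s(projZ x, projZ x + pe a) ∧ 0 ≤ ff L x ∧
      ff L x + vv L a < 1 + 2 * L + L ^ 2 := by
  simp only [rauzyEdges, patchEdges, Set.mem_iUnion] at he
  obtain ⟨i, ⟨t, k⟩, hr, he⟩ := he
  obtain ⟨b1, b2⟩ := patch_bound hL _ _ _ hr
  have hs := vv_sum L k
  have p1 := vv_pos hL (sp k).1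
  have p2 := vv_pos hL (sp k).2
  simp only [sides, cornerCyc, spanVecs_eq, rbase, Set.mem_insert_iff,
    Set.mem_singleton_iff] at he
  rcases he with rfl | rfl | rfl | rfl
  · exact ⟨t, (sp k).1, rfl, b1, by linarith⟩
  · refine ⟨t + eb (sp k).1, (sp k).2, ?_, ?_, ?_⟩
    · simp [projZ_add, projZ_eb]
    · rw [ff_add, ff_eb]; linarith
    · rw [ff_add, ff_eb]; linarith
  · refine ⟨t + eb (sp k).2, (sp k).1, ?_, ?_, ?_⟩
    · simp only [projZ_add, projZ_eb]
      rw [Sym2.eq_swap, add_right_comm]; rfl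
    · rw [ff_add, ff_eb]; linarith
    · rw [ff_add, ff_eb]; linarith
  · refine ⟨t, (sp k).2, ?_, b1, by linarith⟩
    rw [Sym2.eq_swap]; rfl

/-- candidate edges at a point -/
def cand (z : ℝ × ℝ) : Fin 3 × Bool → Sym2 (ℝ × ℝ) :=
  fun p => s(z, if p.2 then z + pe p.1 else z - pe p.1)

theorem star_subset {L : ℝ} (hL : GoodL L) (z : ℝ × ℝ) :
    {s ∈ rauzyEdges | z ∈ s} ⊆ Set.range (cand z) := by
  rintro e ⟨he, hz⟩
  obtain ⟨x, a, rfl, -, -⟩ := side_lift hL he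
  rcases Sym2.mem_iff.1 hz with rfl | rfl
  · exact ⟨(a, true), by simp [cand]⟩
  · exact ⟨(a, false), by simp [cand, Sym2.eq_swap]⟩

theorem range_card (z : ℝ × ℝ) : (Set.range (cand z)).ncard ≤ 6 := by
  rw [← Set.image_univ]
  refine (Set.ncard_image_le (Set.toFinite _)).trans ?_
  simp [Set.ncard_univ]

theorem star_finite {L : ℝ} (hL : GoodL L) (z : ℝ × ℝ) (i : ℕ) :
    {s ∈ patchEdges i | z ∈ s}.Finite :=
  (Set.finite_range (cand z)).subset
    (fun _ h => star_subset hL z ⟨Set.mem_iUnion.2 ⟨i, h.1⟩, h.2⟩)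

theorem six_bound {L : ℝ} (hL : GoodL L) {x : Fin 3 → ℤ} (hx : 0 ≤ ff L x)
    (hx' : ff L x < 1 + 2 * L + L ^ 2) (h6 : degree rauzyEdges (projZ x) = 6) :
    1 ≤ ff L x ∧ ff L x + 1 < 1 + 2 * L + L ^ 2 := by
  have heq := Set.eq_of_subset_of_ncard_le (star_subset hL (projZ x))
    (by rw [degree] at h6; rw [h6]; exact range_card _) (Set.finite_range _)
  have v0 : vv L 0 = 1 := by simp [vv]
  constructor
  · have h : cand (projZ x) (0, false) ∈ Set.range (cand (projZ x)) := ⟨_, rfl⟩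
    rw [← heq] at h
    obtain ⟨y, a, hy, y1, y2⟩ := side_lift hL h.1
    have pa := vv_pos hL a
    simp only [cand, Sym2.eq_iff] at hy
    rcases hy with ⟨q1, q2⟩ | ⟨q1, q2⟩
    · exfalso
      rw [← q1] at q2
      simp only [Bool.false_eq_true, if_false] at q2
      apply pe_add_ne a 0
      linear_combination (exp := 1) -q2
    · simp only [Bool.false_eq_true, if_false] at q2
      have : a = 0 := by
        apply pe_inj
        linear_combination q2 - q1
      subst this
      rw [← projZ_eb, ← projZ_add] at q1
      have := projZ_inj hL q1 hx hx' (by rw [ff_add, ff_eb]; linarith)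
        (by rw [ff_add, ff_eb]; linarith)
      rw [this, ff_add, ff_eb]; linarith
  · have h : cand (projZ x) (0, true) ∈ Set.range (cand (projZ x)) := ⟨_, rfl⟩
    rw [← heq] at h
    obtain ⟨y, a, hy, y1, y2⟩ := side_lift hL h.1
    have pa := vv_pos hL a
    simp only [cand, Sym2.eq_iff, if_true] at hy
    rcases hy with ⟨q1, q2⟩ | ⟨q1, q2⟩
    · have : a = 0 := by
        apply pe_inj
        linear_combination q1 - q2
      subst this
      have := projZ_inj hL q1 hx hx' y1 (by linarith)
      rw [this]; linarith
    · exfalso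
      apply pe_add_ne a 0
      linear_combination q2 - q1

theorem two_le {L : ℝ} (hL : GoodL L) {i : ℕ} {z d1 d2 : ℝ × ℝ} (hd : d1 ≠ d2)
    (h1 : s(z, d1) ∈ patchEdges i) (h2 : s(z, d2) ∈ patchEdges i) :
    2 ≤ degree (patchEdges i) z := by
  have : ({s(z, d1), s(z, d2)} : Set (Sym2 (ℝ × ℝ))).ncard = 2 :=
    Set.ncard_pair (fun h => hd (Sym2.congr_right.1 h))
  rw [← this]
  apply Set.ncard_le_ncard _ (star_finite hL z i)
  rintro e (rfl | rfl)
  · exact ⟨h1, by simp⟩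
  · exact ⟨h2, by simp⟩

theorem three_le {L : ℝ} (hL : GoodL L) {i : ℕ} {z d1 d2 d3 : ℝ × ℝ} (hd : d1 ≠ d2)
    (hd' : d1 ≠ d3) (hd'' : d2 ≠ d3)
    (h1 : s(z, d1) ∈ patchEdges i) (h2 : s(z, d2) ∈ patchEdges i)
    (h3 : s(z, d3) ∈ patchEdges i) :
    3 ≤ degree (patchEdges i) z := by
  have : ({s(z, d1), s(z, d2), s(z, d3)} : Set (Sym2 (ℝ × ℝ))).ncard = 3 :=
    Set.ncard_eq_three.2 ⟨_, _, _, (fun h => hd (Sym2.congr_right.1 h)),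
      (fun h => hd' (Sym2.congr_right.1 h)), (fun h => hd'' (Sym2.congr_right.1 h)), rfl⟩
  rw [← this]
  apply Set.ncard_le_ncard _ (star_finite hL z i)
  rintro e (rfl | rfl | rfl)
  · exact ⟨h1, by simp⟩
  · exact ⟨h2, by simp⟩
  · exact ⟨h3, by simp⟩

theorem sides_mem {i : ℕ} {t : Fin 3 → ℤ} {k : Fin 3} (h : (t, k) ∈ patch i) :
    s(projZ t, projZ t + pe (sp k).1) ∈ patchEdges i ∧
    s(projZ t + pe (sp k).1, projZ t + pe (sp k).1 + pe (sp k).2) ∈ patchEdges i ∧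
    s(projZ t + pe (sp k).1 + pe (sp k).2, projZ t + pe (sp k).2) ∈ patchEdges i ∧
    s(projZ t + pe (sp k).2, projZ t) ∈ patchEdges i := by
  simp only [patchEdges, Set.mem_iUnion]
  refine ⟨⟨_, h, ?_⟩, ⟨_, h, ?_⟩, ⟨_, h, ?_⟩, ⟨_, h, ?_⟩⟩ <;>
    simp [sides, cornerCyc, spanVecs_eq, rbase]

/-- edges at an acute corner `x = t + e_j` of `(t, k)`, `l` the third index -/
theorem acute_edges {i : ℕ} {x : Fin 3 → ℤ} {j k l : Fin 3} (hjk : j ≠ k) (hjl : j ≠ l)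
    (hkl : k ≠ l) (h : (x - eb j, k) ∈ patch i) :
    s(projZ x, projZ x - pe j) ∈ patchEdges i ∧ s(projZ x, projZ x + pe l) ∈ patchEdges i := by
  have hx : projZ (x - eb j) = projZ x - pe j := by
    rw [eq_sub_iff_add_eq, ← projZ_eb, ← projZ_add]; simp
  obtain ⟨h1, h2, h3, h4⟩ := sides_mem h
  rw [hx] at h1 h2 h3 h4
  have : (j = (sp k).1 ∧ l = (sp k).2) ∨ (j = (sp k).2 ∧ l = (sp k).1) := by
    clear h1 h2 h3 h4 hx h
    revert j k l; decide
  rcases this with ⟨rfl, rfl⟩ | ⟨rfl, rfl⟩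
  · simp only [sub_add_cancel] at h1 h2
    exact ⟨by rwa [Sym2.eq_swap], h2⟩
  · rw [add_right_comm] at h3
    simp only [sub_add_cancel] at h3 h4
    exact ⟨h4, by rwa [Sym2.eq_swap]⟩

theorem six_three {L : ℝ} (hL : GoodL L) {i : ℕ} {t : Fin 3 → ℤ} {j k : Fin 3} (hjk : j ≠ k)
    (h : (t, k) ∈ patch i) (hf : 1 ≤ ff L (t + eb j)) :
    3 ≤ degree (patchEdges i) (projZ (t + eb j)) := by
  have aux : ∀ (z : ℝ × ℝ) (a b : Fin 3), z - pe a ≠ z + pe b := by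
    intro z a b h
    apply pe_add_ne a b
    linear_combination -h
  rcases pair hL h hjk hf with ⟨rfl, rfl⟩ | h'
  · have e1 : ((0 : Fin 3 → ℤ) + eb 0) - eb 0 = 0 := by simp
    have h1 := acute_edges (i := i) (x := 0 + eb 0) (j := 0) (k := 1) (l := 2) (by decide)
      (by decide) (by decide) (by rw [e1]; exact zero_mem_patch i _)
    have h2 := acute_edges (i := i) (x := 0 + eb 0) (j := 0) (k := 2) (l := 1) (by decide)
      (by decide) (by decide) (by rw [e1]; exact zero_mem_patch i _)
    refine three_le hL (aux _ _ _) (aux _ _ _) ?_ h1.1 h1.2 h2.2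
    intro h
    have := pe_inj (add_left_cancel h)
    simp at this
  · obtain ⟨l, hl, hl'⟩ : ∃ l, j ≠ l ∧ k ≠ l := by
      clear h h' hf; revert j k; decide
    have h1 := acute_edges (x := t + eb j) hjk hl hl' (by simpa using h)
    have h2 := acute_edges (x := t + eb j) hjk.symm hl' hl h'
    refine three_le hL ?_ (aux _ _ _) (aux _ _ _) h1.1 h2.1 h1.2
    intro h
    exact hjk (pe_inj (sub_right_injective h))

theorem main_aux {L : ℝ} (hL : GoodL L) (i : ℕ) (z : ℝ × ℝ) (hz : IsPatchVertex i z) :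
    2 ≤ degree (patchEdges i) z ∧
    (degree rauzyEdges z = 6 → 3 ≤ degree (patchEdges i) z) := by
  obtain ⟨⟨t, k⟩, hr, m, rfl⟩ := hz
  obtain ⟨b1, b2⟩ := patch_bound hL _ _ _ hr
  obtain ⟨n1, n2, n3⟩ := sp_ne k
  obtain ⟨h1, h2, h3, h4⟩ := sides_mem hr
  have hs := vv_sum L k
  have q0 := vv_le hL k
  have q1 := vv_pos hL (sp k).1
  have q2 := vv_pos hL (sp k).2
  have a1 : projZ t + pe (sp k).1 ≠ projZ t + pe (sp k).2 :=
    fun h => n1 (pe_inj (add_left_cancel h))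
  have a2 : projZ t + pe (sp k).1 + pe (sp k).2 ≠ projZ t := by
    intro h
    apply pe_add_ne (sp k).1 (sp k).2
    linear_combination h
  have g1 := h1
  have g2 := h2
  have g3 := h3
  have g4 := h4
  rw [Sym2.eq_swap] at g1 g2 g3 g4
  fin_cases m <;> simp only [cornerCyc, spanVecs_eq, rbase]
  · refine ⟨two_le hL a1 h1 g4, fun h6 => ?_⟩
    have := six_bound hL b1 (by linarith) h6
    linarith
  · refine ⟨two_le hL a2 h2 g1, fun h6 => ?_⟩
    change degree rauzyEdges (projZ t + pe (sp k).1) = 6 at h6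
    change 3 ≤ degree _ (projZ t + pe (sp k).1)
    rw [← projZ_eb, ← projZ_add] at h6 ⊢
    have := six_bound hL (by rw [ff_add, ff_eb]; linarith) (by rw [ff_add, ff_eb]; linarith) h6
    exact six_three hL n2 hr this.1
  · refine ⟨two_le hL a1 g2 h3, fun h6 => ?_⟩
    change degree rauzyEdges (projZ t + pe (sp k).1 + pe (sp k).2) = 6 at h6
    rw [← projZ_eb, ← projZ_eb, ← projZ_add, ← projZ_add] at h6
    have := six_bound hL (by rw [ff_add, ff_add, ff_eb, ff_eb]; linarith)
      (by rw [ff_add, ff_add, ff_eb, ff_eb]; linarith) h6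
    rw [ff_add, ff_add, ff_eb, ff_eb] at this
    linarith
  · refine ⟨two_le hL a2 g3 h4, fun h6 => ?_⟩
    change degree rauzyEdges (projZ t + pe (sp k).2) = 6 at h6
    change 3 ≤ degree _ (projZ t + pe (sp k).2)
    rw [← projZ_eb, ← projZ_add] at h6 ⊢
    have := six_bound hL (by rw [ff_add, ff_eb]; linarith) (by rw [ff_add, ff_eb]; linarith) h6
    exact six_three hL n3 hr this.1

/-- **Statement 12** (Bound on `(k,n)`-vertices, Lemma `nkvertice`).
For every `i ≥ 0` and every vertex `z` of `Q_i`, if `z` is an `n`-vertex in the full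
Rauzy quiver `Q` and a `k`-vertex in `Q_i` (a `(k,n)`-vertex), then `n - k ≤ 3`;
equivalently, no `(2,6)`-vertex occurs in any `Q_i`. -/
theorem statement12 (i : ℕ) (z : ℝ × ℝ) (hz : IsPatchVertex i z) (n K : ℕ)
    (hn : degree rauzyEdges z = n) (hk : degree (patchEdges i) z = K) :
    n - K ≤ 3 ∧ ¬(K = 2 ∧ n = 6) := by
  obtain ⟨L, hL⟩ := exists_goodL
  obtain ⟨h2, h3⟩ := main_aux hL i z hz
  have h6 : degree rauzyEdges z ≤ 6 :=
    (Set.ncard_le_ncard (star_subset hL z) (Set.finite_range _)).trans (range_card z)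
  rw [hn] at h3 h6
  rw [hk] at h2 h3
  omega
end
end
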